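/- arXiv:2509.26297 — 5 statements merged into one kernel-verified Lean document; each statement's English description precedes it below -/
import Mathlib

section
/- For every complex number z with 0 < |z| < 1, the power series Σ_{n≥1} √n · z^n converges and equals G(z); that is, Σ_{n≥1} n^{1/2} z^n = (√π/2) · Σ_{n∈ℤ} (2πin − Log z)^{−3/2}. -/
/-!
With `w = -log z`, whose real part is positive, the terms of the power series are the values at the
natural numbers of `t ↦ t₊ ^ (1 / 2) * exp (-w t)`, so Poisson summation applies. For any `a` with
`1 < Re a`, the Fourier transform of `t ↦ t₊ ^ (a - 1) * exp (-w t)` at `ξ` is a Laplace transform,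
`Γ(a) * (2πiξ + w) ^ (-a)`: this is the Gamma integral when `2πiξ + w` is replaced by a positive
real number, and analytic continuation extends the formula to the right half-plane. The outcome is
the Lipschitz summation formula
`∑_{n ≥ 1} n ^ (a - 1) * exp (-w n) = Γ(a) * ∑_{n ∈ ℤ} (2πin + w) ^ (-a)`, used at `a = 3 / 2`.
-/

/-- 't Hooft's analytically continued fractional polylogarithm
`G(z) = (√π/2) · Σ_{n∈ℤ} (2πin − Log z)^{−3/2}`. -/
noncomputable def G (z : ℂ) : ℂ :=
  (Real.sqrt Real.pi / 2) *
    ∑' n : ℤ, (2 * (Real.pi : ℂ) * Complex.I * (n : ℂ) - Complex.log z) ^ (-(3 : ℂ) / 2)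

open Asymptotics Complex Filter MeasureTheory Set
open scoped FourierTransform Real Topology

theorem eqOn_re_pos_of_forall_ofReal_eq {E : Type*} [NormedAddCommGroup E] [NormedSpace ℂ E]
    [CompleteSpace E] {f g : ℂ → E} (hf : DifferentiableOn ℂ f {s | 0 < s.re})
    (hg : DifferentiableOn ℂ g {s | 0 < s.re}) (hfg : ∀ x : ℝ, 0 < x → f x = g x) :
    EqOn f g {s | 0 < s.re} := by
  have hopen : IsOpen {s : ℂ | 0 < s.re} := isOpen_lt continuous_const continuous_re
  have hconn : IsPreconnected {s : ℂ | 0 < s.re} := (convex_halfSpace_re_gt 0).isPreconnected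
  have htendsto : Tendsto ((↑) : ℝ → ℂ) (𝓝[≠] 1) (𝓝[≠] (1 : ℝ)) :=
    continuous_ofReal.continuousWithinAt.tendsto_nhdsWithin fun _ hx => ofReal_injective.ne hx
  have heq : ∀ᶠ x : ℝ in 𝓝[≠] 1, f x = g x := by
    filter_upwards [nhdsWithin_le_nhds (Ioi_mem_nhds one_pos)] with x hx using hfg x hx
  exact (hf.analyticOnNhd hopen).eqOn_of_preconnected_of_frequently_eq (hg.analyticOnNhd hopen)
    hconn (by simp) (htendsto.frequently heq.frequently)

section LaplaceTransform

variable {a w : ℂ} {t : ℝ}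

theorem norm_cpow_mul_cexp_neg_mul (a w : ℂ) (ht : 0 < t) :
    ‖(t : ℂ) ^ (a - 1) * cexp (-(w * t))‖ = t ^ (a.re - 1) * rexp (-w.re * t) := by
  simp [norm_cpow_eq_rpow_re_of_pos ht, norm_exp]

theorem continuousOn_cpow_mul_cexp_neg_mul_Ioi (a w : ℂ) :
    ContinuousOn (fun t : ℝ => (t : ℂ) ^ (a - 1) * cexp (-(w * t))) (Ioi 0) := by
  intro t ht
  have hcpow : ContinuousAt (fun t : ℝ => (t : ℂ) ^ (a - 1)) t :=
    continuousAt_ofReal_cpow_const t (a - 1) (Or.inr ht.ne')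
  exact (hcpow.mul (by fun_prop)).continuousWithinAt

theorem integrableOn_rpow_mul_exp_neg_mul_Ioi {s b : ℝ} (hs : -1 < s) (hb : 0 < b) :
    IntegrableOn (fun t : ℝ => t ^ s * rexp (-b * t)) (Ioi 0) := by
  simpa using integrableOn_rpow_mul_exp_neg_mul_rpow hs one_pos hb

theorem integrableOn_cpow_mul_cexp_neg_mul_Ioi (ha : 0 < a.re) (hw : 0 < w.re) :
    IntegrableOn (fun t : ℝ => (t : ℂ) ^ (a - 1) * cexp (-(w * t))) (Ioi 0) := by
  refine (integrableOn_rpow_mul_exp_neg_mul_Ioi (s := a.re - 1) (by linarith) hw).mono'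
    ((continuousOn_cpow_mul_cexp_neg_mul_Ioi a w).aestronglyMeasurable measurableSet_Ioi) ?_
  filter_upwards [ae_restrict_mem measurableSet_Ioi] with t ht
  exact (norm_cpow_mul_cexp_neg_mul a w ht).le

theorem differentiableAt_integral_cpow_mul_cexp_neg_mul_Ioi (ha : 0 < a.re) (hw : 0 < w.re) :
    DifferentiableAt ℂ (fun s : ℂ => ∫ t : ℝ in Ioi 0, (t : ℂ) ^ (a - 1) * cexp (-(s * t))) w := by
  have hnhds : {s : ℂ | w.re / 2 < s.re} ∈ 𝓝 w :=
    (isOpen_lt continuous_const continuous_re).mem_nhds (half_lt_self hw)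
  have hderiv (t : ℝ) (s : ℂ) : HasDerivAt (fun s : ℂ => (t : ℂ) ^ (a - 1) * cexp (-(s * t)))
      ((t : ℂ) ^ (a - 1) * cexp (-(s * t)) * -t) s := by
    simpa [mul_assoc] using (((hasDerivAt_id s).mul_const (t : ℂ)).neg.cexp.const_mul _)
  have hbound : ∀ t ∈ Ioi (0 : ℝ), ∀ s ∈ {s : ℂ | w.re / 2 < s.re},
      ‖(t : ℂ) ^ (a - 1) * cexp (-(s * t)) * -t‖ ≤ t ^ a.re * rexp (-(w.re / 2) * t) := by
    intro t ht s hs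
    have ht' : 0 < t := ht
    have hs' : w.re / 2 < s.re := hs
    calc ‖(t : ℂ) ^ (a - 1) * cexp (-(s * t)) * -t‖
        = t ^ a.re * rexp (-s.re * t) := by
          rw [norm_mul, norm_cpow_mul_cexp_neg_mul a s ht, norm_neg, norm_real,
            Real.norm_of_nonneg ht'.le, mul_right_comm, Real.rpow_sub_one ht'.ne',
            div_mul_cancel₀ _ ht'.ne']
      _ ≤ t ^ a.re * rexp (-(w.re / 2) * t) := by gcongr
  have hmeas (s : ℂ) : AEStronglyMeasurable (fun t : ℝ => (t : ℂ) ^ (a - 1) * cexp (-(s * t)))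
      (volume.restrict (Ioi 0)) :=
    (continuousOn_cpow_mul_cexp_neg_mul_Ioi a s).aestronglyMeasurable measurableSet_Ioi
  exact (hasDerivAt_integral_of_dominated_loc_of_deriv_le hnhds (.of_forall hmeas)
    (integrableOn_cpow_mul_cexp_neg_mul_Ioi ha hw) ((hmeas w).mul (by fun_prop))
    ((ae_restrict_mem measurableSet_Ioi).mono hbound)
    (integrableOn_rpow_mul_exp_neg_mul_Ioi (by linarith) (half_pos hw))
    (.of_forall fun t s _ => hderiv t s)).2.differentiableAt

theorem integral_cpow_mul_cexp_neg_mul_Ioi (ha : 0 < a.re) (hw : 0 < w.re) :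
    ∫ t : ℝ in Ioi 0, (t : ℂ) ^ (a - 1) * cexp (-(w * t)) = Gamma a * w ^ (-a) := by
  refine eqOn_re_pos_of_forall_ofReal_eq
    (f := fun s => ∫ t : ℝ in Ioi 0, (t : ℂ) ^ (a - 1) * cexp (-(s * t)))
    (g := fun s => Gamma a * s ^ (-a)) (fun s hs => ?_) (fun s hs => ?_) (fun x hx => ?_) hw
  · exact (differentiableAt_integral_cpow_mul_cexp_neg_mul_Ioi ha hs).differentiableWithinAt
  · exact ((differentiableAt_id.cpow_const (Or.inl hs)).const_mul _).differentiableWithinAt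
  · have harg : (x : ℂ).arg ≠ π := by simp [arg_ofReal_of_nonneg hx.le, Real.pi_ne_zero.symm]
    rw [integral_cpow_mul_exp_neg_mul_Ioi ha hx, one_div, inv_cpow _ _ harg, cpow_neg, mul_comm]

end LaplaceTransform

section GammaKernel

/-- The function `t ↦ t₊ ^ (a - 1) * exp (-w t)` on `ℝ`, the Gamma density with shape `a` and rate
`w` up to normalization; it is the function to which Poisson summation is applied. For `a ≠ 1` it
vanishes on `(-∞, 0]`, because `0 ^ (a - 1) = 0`. -/
noncomputable def gammaKernel (a w : ℂ) (t : ℝ) : ℂ :=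
  (max t 0 : ℝ) ^ (a - 1) * cexp (-(w * t))

variable {a w : ℂ} {t : ℝ}

theorem gammaKernel_of_nonneg (a w : ℂ) (ht : 0 ≤ t) :
    gammaKernel a w t = (t : ℂ) ^ (a - 1) * cexp (-(w * t)) := by
  rw [gammaKernel, max_eq_left ht]

theorem gammaKernel_of_nonpos (ha : a ≠ 1) (w : ℂ) (ht : t ≤ 0) : gammaKernel a w t = 0 := by
  rw [gammaKernel, max_eq_right ht, ofReal_zero, zero_cpow (sub_ne_zero.mpr ha), zero_mul]

theorem continuous_gammaKernel (ha : 1 < a.re) (w : ℂ) : Continuous (gammaKernel a w) := by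
  have hcpow : Continuous fun t : ℝ => (t : ℂ) ^ (a - 1) :=
    continuous_ofReal_cpow_const (by simpa using ha)
  exact (hcpow.comp (continuous_id.max continuous_const)).mul (by fun_prop)

theorem gammaKernel_isBigO_cocompact (ha : a ≠ 1) (hw : 0 < w.re) (b : ℝ) :
    gammaKernel a w =O[cocompact ℝ] (|·| ^ b) := by
  rw [cocompact_eq_atBot_atTop, isBigO_sup]
  constructor
  · have hzero : gammaKernel a w =ᶠ[atBot] 0 :=
      (eventually_le_atBot 0).mono fun t ht => gammaKernel_of_nonpos ha w ht
    exact hzero.trans_isBigO (isBigO_zero _ _)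
  · have hdecay := (isBigO_refl (fun t : ℝ => t ^ (a.re - 1)) atTop).mul
      (isLittleO_exp_neg_mul_rpow_atTop hw (b - (a.re - 1))).isBigO
    refine (hdecay.congr' ?_ ?_).of_norm_left
    · filter_upwards [eventually_gt_atTop 0] with t ht
      rw [gammaKernel_of_nonneg a w ht.le, norm_cpow_mul_cexp_neg_mul a w ht]
    · filter_upwards [eventually_gt_atTop 0] with t ht
      rw [← Real.rpow_add ht, add_sub_cancel, abs_of_pos ht]

theorem integral_gammaKernel (ha : 0 < a.re) (ha' : a ≠ 1) (hw : 0 < w.re) :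
    ∫ t : ℝ, gammaKernel a w t = Gamma a * w ^ (-a) := by
  rw [← integral_cpow_mul_cexp_neg_mul_Ioi ha hw,
    ← setIntegral_eq_integral_of_forall_compl_eq_zero (s := Ioi 0)
      fun t ht => gammaKernel_of_nonpos ha' w (not_lt.mp ht)]
  exact setIntegral_congr_fun measurableSet_Ioi fun t ht => gammaKernel_of_nonneg a w (le_of_lt ht)

theorem fourier_gammaKernel (ha : 0 < a.re) (ha' : a ≠ 1) (hw : 0 < w.re) (ξ : ℝ) :
    𝓕 (gammaKernel a w) ξ = Gamma a * (2 * π * I * ξ + w) ^ (-a) := by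
  rw [Real.fourier_real_eq_integral_exp_smul, ← integral_gammaKernel ha ha' (by simpa using hw)]
  congr 1 with t
  rw [gammaKernel, gammaKernel, smul_eq_mul, mul_left_comm, ← Complex.exp_add]
  push_cast
  ring_nf

end GammaKernel

theorem isBigO_mul_ofReal_add_cpow_cocompact {c : ℂ} (hc : c ≠ 0) (w s : ℂ) :
    (fun ξ : ℝ => (c * ξ + w) ^ s) =O[cocompact ℝ] fun ξ : ℝ => |ξ| ^ s.re := by
  have hlinear : (fun ξ : ℝ => c * ξ) =Θ[cocompact ℝ] fun ξ : ℝ => ξ :=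
    (isTheta_const_mul_left hc).mpr (.of_norm_eventuallyEq_norm (.of_forall fun ξ => norm_real ξ))
  have hconst : (fun _ : ℝ => w) =o[cocompact ℝ] fun ξ : ℝ => ξ :=
    isLittleO_const_left.mpr (.inr tendsto_norm_cocompact_atTop)
  have hnorm : (fun ξ : ℝ => ‖c * ξ + w‖) =Θ[cocompact ℝ] fun ξ : ℝ => |ξ| :=
    (hlinear.add_isLittleO hconst).norm_left.norm_right
  exact (isBigO_cpow_rpow isBoundedUnder_const).trans
    (hnorm.rpow (.of_forall fun _ => norm_nonneg _) (.of_forall fun _ => abs_nonneg _)).isBigO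

theorem summable_mul_intCast_add_cpow {c s : ℂ} (hc : c ≠ 0) (w : ℂ) (hs : s.re < -1) :
    Summable fun n : ℤ => (c * n + w) ^ s := by
  have hpow : Summable fun n : ℤ => |(n : ℝ)| ^ s.re := by
    simpa using Real.summable_abs_int_rpow (b := -s.re) (by linarith)
  simpa [Function.comp_def] using summable_of_isBigO hpow
    ((isBigO_mul_ofReal_add_cpow_cocompact hc w s).comp_tendsto Int.tendsto_coe_cofinite)

theorem hasSum_nat_tsum_fourier_of_rpow_decay {f : ℝ → ℂ} (hc : Continuous f) {b : ℝ} (hb : 1 < b)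
    (hf : f =O[cocompact ℝ] (|·| ^ (-b))) (hFf : Summable fun n : ℤ => 𝓕 f n)
    (hneg : ∀ t < 0, f t = 0) :
    HasSum (fun n : ℕ => f n) (∑' n : ℤ, 𝓕 f n) := by
  have hsum : Summable fun n : ℤ => f n :=
    summable_of_isBigO (Real.summable_abs_int_rpow hb) (hf.comp_tendsto Int.tendsto_coe_cofinite)
  have hpoisson : ∑' n : ℤ, f n = ∑' n : ℤ, 𝓕 f n := by
    simpa using Real.tsum_eq_tsum_fourier_of_rpow_decay_of_summable hc hb hf hFf 0
  have hsupport : ∀ n : ℤ, n ∉ range ((↑) : ℕ → ℤ) → f n = 0 := by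
    intro n hn
    refine hneg n (Int.cast_lt_zero.mpr ?_)
    by_contra! h
    exact hn ⟨n.toNat, Int.toNat_of_nonneg h⟩
  simpa [Function.comp_def, hpoisson] using
    (Nat.cast_injective.hasSum_iff hsupport).mpr hsum.hasSum

theorem hasSum_natCast_cpow_mul_cexp_neg_mul {a w : ℂ} (ha : 1 < a.re) (hw : 0 < w.re) :
    HasSum (fun n : ℕ => (n : ℂ) ^ (a - 1) * cexp (-(w * n)))
      (Gamma a * ∑' n : ℤ, (2 * π * I * n + w) ^ (-a)) := by
  have ha' : a ≠ 1 := fun h => by simp [h] at ha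
  have hfourier (n : ℤ) : 𝓕 (gammaKernel a w) n = Gamma a * (2 * π * I * n + w) ^ (-a) := by
    simpa using fourier_gammaKernel (one_pos.trans ha) ha' hw n
  have hsummable : Summable fun n : ℤ => 𝓕 (gammaKernel a w) n := by
    simpa only [hfourier] using
      (summable_mul_intCast_add_cpow two_pi_I_ne_zero w (by simpa using ha)).mul_left (Gamma a)
  have hpoisson := hasSum_nat_tsum_fourier_of_rpow_decay (continuous_gammaKernel ha w) one_lt_two
    (gammaKernel_isBigO_cocompact ha' hw _) hsummable fun t ht => gammaKernel_of_nonpos ha' w ht.le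
  simpa only [hfourier, tsum_mul_left, gammaKernel_of_nonneg a w (Nat.cast_nonneg _),
    ofReal_natCast] using hpoisson

theorem ofReal_cpow_one_half {x : ℝ} (hx : 0 ≤ x) : (x : ℂ) ^ (1 / 2 : ℂ) = √x := by
  rw [Real.sqrt_eq_rpow, ofReal_cpow hx, ofReal_div, ofReal_one, ofReal_ofNat]

theorem Gamma_three_halves_eq : Gamma (3 / 2) = √π / 2 := by
  rw [show (3 / 2 : ℂ) = 1 / 2 + 1 by norm_num, Gamma_add_one _ (by norm_num), Gamma_one_half_eq,
    ofReal_cpow_one_half Real.pi_pos.le, one_div_mul_eq_div]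

/-- For `0 < |z| < 1`, the power series `Σ_{n≥1} √n zⁿ` converges with sum `G(z)`. -/
theorem sqrt_series_hasSum_G (z : ℂ) (h0 : 0 < ‖z‖) (h1 : ‖z‖ < 1) :
    HasSum (fun n : ℕ => (Real.sqrt n : ℂ) * z ^ n) (G z) := by
  have hw : 0 < (-log z).re := by simpa [log_re] using Real.log_neg h0 h1
  have hpow (n : ℕ) : cexp (-(-log z * n)) = z ^ n := by
    rw [neg_mul, neg_neg, mul_comm, exp_nat_mul, exp_log (norm_pos_iff.mp h0)]
  have hsqrt (n : ℕ) : (n : ℂ) ^ (3 / 2 - 1 : ℂ) = √(n : ℝ) := by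
    rw [show (3 / 2 - 1 : ℂ) = 1 / 2 by norm_num, ← ofReal_natCast,
      ofReal_cpow_one_half n.cast_nonneg]
  have hlipschitz := hasSum_natCast_cpow_mul_cexp_neg_mul (a := 3 / 2) (by norm_num) hw
  simpa only [hpow, hsqrt, Gamma_three_halves_eq, ← sub_eq_add_neg, ← neg_div, G] using hlipschitz
end

section
/- For every complex number z with |z| ≥ 1, Im z ≥ 0 and z ∉ [1,∞), one has the inversion formula G(z) = i·G(1/z) + ((i − 1)/(4π)) · Σ_{n≥0} (n + Log z/(2πi))^{−3/2}, where the series over n ≥ 0 converges absolutely. -/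
/-!
For `Re s < -1`, let `S(w)` be the sum of `(-ℓ) ^ s` over all `ℓ` congruent to `w` modulo `2πi`, so
that `G z` is a multiple of `S(Log z)`. Since `S` depends on `exp w` only, `G (1/z)` is the same
multiple of `S(-Log z)`, whatever the branch of `Log (1/z)`. The terms of `S(w)` and `S(-w)` are the
powers of `-v` and of `v`, where `v` runs over `2πin + w`, and `(-v) ^ s = exp (∓πis) v ^ s` for `v`
in the upper and lower half plane respectively. When `0 < Im w < 2π`, the `v` in the lower half
plane are those with `n < 0`, so they cancel in `S(w) - exp (πis) S(-w)`, leaving a multiple of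
`∑_{n ≥ 0} v ^ s`.
-/

open Complex Filter Asymptotics
open scoped Real

section Cpow

variable {x y : ℂ}

lemma neg_cpow_of_im_pos (hx : 0 < x.im) (s : ℂ) : (-x) ^ s = exp (-(π * I * s)) * x ^ s := by
  have hx₀ : x ≠ 0 := by rintro rfl; exact hx.false
  have hlog : log (-x) = log x - π * I := by
    simp only [log, norm_neg, arg_neg_eq_arg_sub_pi_of_im_pos hx, ofReal_sub]
    ring
  rw [cpow_def_of_ne_zero (neg_ne_zero.2 hx₀), cpow_def_of_ne_zero hx₀, hlog, ← exp_add]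
  ring_nf

lemma neg_cpow_of_im_neg (hx : x.im < 0) (s : ℂ) : (-x) ^ s = exp (π * I * s) * x ^ s := by
  have h := neg_cpow_of_im_pos (x := -x) (by simpa using hx) s
  rw [neg_neg, exp_neg] at h
  rw [h, mul_inv_cancel_left₀ (exp_ne_zero _)]

lemma mul_cpow_of_arg_add_arg_mem (hx : x ≠ 0) (hy : y ≠ 0) (h : arg x + arg y ∈ Set.Ioc (-π) π)
    (s : ℂ) : (x * y) ^ s = x ^ s * y ^ s := by
  rw [cpow_def_of_ne_zero (mul_ne_zero hx hy), cpow_def_of_ne_zero hx, cpow_def_of_ne_zero hy,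
    log_mul hx hy h, add_mul, exp_add]

lemma two_pi_I_mul_cpow_of_re_pos (hx : 0 < x.re) (s : ℂ) :
    (2 * π * I * x) ^ s = (2 * π * I) ^ s * x ^ s := by
  have hx₀ : x ≠ 0 := by rintro rfl; exact hx.false
  have harg : arg (2 * π * I) = π / 2 := by
    simpa using arg_real_mul I Real.two_pi_pos
  obtain ⟨hlower, hupper⟩ := abs_lt.1 (abs_arg_lt_pi_div_two_iff.2 (.inl hx))
  refine mul_cpow_of_arg_add_arg_mem two_pi_I_ne_zero hx₀ ?_ s
  rw [harg]
  constructor <;> linarith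

lemma two_pi_I_cpow_neg_three_half :
    (2 * π * I) ^ (-3 / 2 : ℂ) = -(√π * (1 + I)) / (4 * π ^ 2) := by
  have hπ : (√π : ℂ) ^ 2 = π := by exact_mod_cast Real.sq_sqrt Real.pi_nonneg
  have hsq : 2 * π * I = (√π * (1 + I)) ^ 2 := by
    linear_combination (-2 * I) * hπ - (√π : ℂ) ^ 2 * I_sq
  have hroot : (2 * π * I) ^ (2⁻¹ : ℂ) = √π * (1 + I) := by
    rw [hsq]
    exact sq_cpow_two_inv (by simp [Real.pi_pos])
  rw [show (-3 / 2 : ℂ) = 2⁻¹ - 2 by norm_num, cpow_sub _ _ two_pi_I_ne_zero, hroot, cpow_ofNat,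
    mul_pow, I_sq]
  ring

end Cpow

section Summability

variable {c s : ℂ}

lemma isTheta_mul_intCast_add (hc : c ≠ 0) (w : ℂ) :
    (fun n : ℤ ↦ c * n + w) =Θ[cofinite] fun n ↦ (n : ℝ) := by
  have hfactor : (fun n : ℤ ↦ c * n + w) =
      fun n : ℤ ↦ c * ((1 : ℤ) * (w / c) + n + (0 : ℤ)) := by
    ext n
    push_cast
    field_simp
    ring
  rw [hfactor]
  exact (EisensteinSeries.linear_isTheta_right_add 1 0 (w / c)).const_mul_left hc

lemma summable_norm_mul_intCast_add_cpow (hc : c ≠ 0) (w : ℂ) (hs : s.re < -1) :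
    Summable fun n : ℤ ↦ ‖(c * n + w) ^ s‖ := by
  have hO : (fun n : ℤ ↦ (c * n + w) ^ s) =O[cofinite] fun n ↦ |(n : ℝ)| ^ s.re :=
    (isBigO_cpow_rpow isBoundedUnder_const).trans <|
      ((isTheta_mul_intCast_add hc w).norm_left.norm_right.rpow
        (.of_forall fun _ ↦ norm_nonneg _) (.of_forall fun _ ↦ norm_nonneg _)).isBigO
  refine summable_of_isBigO ?_ hO.norm_left
  simpa using Real.summable_abs_int_rpow (lt_neg_of_lt_neg hs)

lemma summable_norm_natCast_add_cpow (hs : s.re < -1) (a : ℂ) :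
    Summable fun n : ℕ ↦ ‖(n + a) ^ s‖ := by
  simpa [Function.comp_def] using
    (summable_norm_mul_intCast_add_cpow one_ne_zero a hs).comp_injective Nat.cast_injective

end Summability

lemma tsum_neg_cpow_of_im_pos_of_im_neg {v : ℤ → ℂ} {s : ℂ} (hpos : ∀ n : ℕ, 0 < (v n).im)
    (hneg : ∀ n < 0, (v n).im < 0) (hsum : Summable fun n ↦ v n ^ s) :
    ∑' n, (-v n) ^ s = exp (π * I * s) * ∑' n, v n ^ s +
      (exp (-(π * I * s)) - exp (π * I * s)) * ∑' n : ℕ, v n ^ s := by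
  let d (n : ℤ) : ℂ := (-v n) ^ s - exp (π * I * s) * v n ^ s
  have hd_nat (n : ℕ) : d n = (exp (-(π * I * s)) - exp (π * I * s)) * v n ^ s := by
    simp only [d, neg_cpow_of_im_pos (hpos n), sub_mul]
  have hd_neg (n : ℤ) (hn : n ∉ Set.range ((↑) : ℕ → ℤ)) : d n = 0 :=
    sub_eq_zero.2 <| neg_cpow_of_im_neg
      (hneg n <| not_le.1 fun h ↦ hn ⟨n.toNat, Int.toNat_of_nonneg h⟩) s
  have hd : Summable d := by
    refine (Nat.cast_injective.summable_iff hd_neg).1 ?_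
    simpa only [Function.comp_def, hd_nat] using
      (hsum.comp_injective Nat.cast_injective).mul_left _
  calc ∑' n, (-v n) ^ s
    _ = ∑' n, (exp (π * I * s) * v n ^ s + d n) := by simp only [d, add_sub_cancel]
    _ = exp (π * I * s) * ∑' n, v n ^ s + ∑' n, d n := by
      rw [(hsum.mul_left _).tsum_add hd, tsum_mul_left]
    _ = exp (π * I * s) * ∑' n, v n ^ s + ∑' n : ℕ, d n := by
      rw [Nat.cast_injective.tsum_eq (Function.support_subset_iff'.2 hd_neg)]
    _ = _ := by simp only [hd_nat, tsum_mul_left]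

/-- The sum of `(-ℓ) ^ s` over the numbers `ℓ` congruent to `w` modulo `2πi`. For `w = Log z` these
are all the logarithms of `z`, and `s = -3/2` gives `G z` up to a constant factor. -/
noncomputable def branchSum (s w : ℂ) : ℂ :=
  ∑' n : ℤ, (2 * π * I * n - w) ^ s

section BranchSum

variable {s w w' z : ℂ}

lemma branchSum_eq_of_exp_eq (s : ℂ) (h : exp w = exp w') : branchSum s w = branchSum s w' := by
  obtain ⟨m, rfl⟩ := exp_eq_exp_iff_exists_int.1 h
  rw [branchSum, ← (Equiv.addRight m).tsum_eq, branchSum]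
  refine tsum_congr fun n ↦ ?_
  rw [Equiv.coe_addRight, Int.cast_add]
  ring_nf

lemma branchSum_log_inv (s : ℂ) (hz : z ≠ 0) : branchSum s (log z⁻¹) = branchSum s (-log z) :=
  branchSum_eq_of_exp_eq s <| by rw [exp_log (inv_ne_zero hz), exp_neg, exp_log hz]

lemma branchSum_eq_tsum_neg (s w : ℂ) : branchSum s w = ∑' n : ℤ, (-(2 * π * I * n + w)) ^ s := by
  rw [branchSum, ← (Equiv.neg ℤ).tsum_eq]
  refine tsum_congr fun n ↦ ?_
  rw [Equiv.neg_apply, Int.cast_neg]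
  ring_nf

lemma branchSum_eq_exp_mul_branchSum_neg_add (hs : s.re < -1) (hw : 0 < w.im)
    (hw' : w.im < 2 * π) :
    branchSum s w = exp (π * I * s) * branchSum s (-w) +
      (exp (-(π * I * s)) - exp (π * I * s)) * ∑' n : ℕ, (2 * π * I * n + w) ^ s := by
  have him (n : ℤ) : (2 * π * I * n + w).im = 2 * π * n + w.im := by simp
  rw [branchSum_eq_tsum_neg, tsum_neg_cpow_of_im_pos_of_im_neg]
  · simp only [branchSum, sub_neg_eq_add, Int.cast_natCast]
  · intro n
    rw [him, Int.cast_natCast]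
    positivity
  · intro n hn
    have : (n : ℝ) ≤ -1 := by exact_mod_cast Int.le_sub_one_of_lt hn
    rw [him]
    nlinarith [Real.pi_pos]
  · exact (summable_norm_mul_intCast_add_cpow two_pi_I_ne_zero w hs).of_norm

lemma div_two_pi_I_re (w : ℂ) : (w / (2 * π * I)).re = w.im / (2 * π) := by
  rw [show 2 * π * I = ((2 * π : ℝ) : ℂ) * I by push_cast; rfl, ← div_div, div_I, neg_re,
    mul_I_re, neg_neg, div_ofReal_im]

lemma tsum_two_pi_I_mul_natCast_add_cpow (s : ℂ) (hw : 0 < w.im) :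
    ∑' n : ℕ, (2 * π * I * n + w) ^ s =
      (2 * π * I) ^ s * ∑' n : ℕ, (n + w / (2 * π * I)) ^ s := by
  rw [← tsum_mul_left]
  refine tsum_congr fun n ↦ ?_
  have hre : 0 < (n + w / (2 * π * I)).re := by
    rw [add_re, natCast_re, div_two_pi_I_re]
    positivity
  rw [← two_pi_I_mul_cpow_of_re_pos hre, mul_add, mul_div_cancel₀ _ two_pi_I_ne_zero]

end BranchSum

lemma G_eq_branchSum (z : ℂ) : G z = √π / 2 * branchSum (-3 / 2) (log z) :=
  rfl

lemma exp_pi_I_mul_neg_three_half : exp (π * I * (-3 / 2)) = I := by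
  rw [show π * I * (-3 / 2) = π / 2 * I - 2 * π * I by ring, exp_sub, exp_two_pi_mul_I,
    exp_pi_div_two_mul_I, div_one]

lemma neg_I_mul_sqrt_pi_mul_two_pi_I_cpow :
    -I * √π * (2 * π * I) ^ (-3 / 2 : ℂ) = (I - 1) / (4 * π) := by
  have hπ : (√π : ℂ) ^ 2 = π := by exact_mod_cast Real.sq_sqrt Real.pi_nonneg
  have hπ₀ : (π : ℂ) ≠ 0 := ofReal_ne_zero.2 Real.pi_ne_zero
  rw [two_pi_I_cpow_neg_three_half]
  field_simp
  linear_combination (I + I ^ 2) * hπ + π * I_sq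

theorem G_inversion_general (z : ℂ) (hz : 0 < arg z) :
    Summable (fun n : ℕ ↦ ‖(n + log z / (2 * π * I)) ^ (-3 / 2 : ℂ)‖) ∧
    G z = I * G (1 / z) + (I - 1) / (4 * π) *
      ∑' n : ℕ, (n + log z / (2 * π * I)) ^ (-3 / 2 : ℂ) := by
  have hz₀ : z ≠ 0 := by rintro rfl; simp at hz
  have hs : (-3 / 2 : ℂ).re < -1 := by norm_num
  have him : 0 < (log z).im := by rwa [log_im]
  have him' : (log z).im < 2 * π := by linarith [log_im_le_pi z, Real.pi_pos]
  refine ⟨summable_norm_natCast_add_cpow hs _, ?_⟩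
  have h := branchSum_eq_exp_mul_branchSum_neg_add hs him him'
  rw [tsum_two_pi_I_mul_natCast_add_cpow _ him, exp_neg, exp_pi_I_mul_neg_three_half, inv_I] at h
  rw [← neg_I_mul_sqrt_pi_mul_two_pi_I_cpow, G_eq_branchSum, G_eq_branchSum, one_div,
    branchSum_log_inv _ hz₀]
  linear_combination (√π / 2 : ℂ) * h

/-- Inversion formula: for `|z| ≥ 1`, `Im z ≥ 0`, `z ∉ [1,∞)`, the series
`Σ_{n≥0} (n + Log z/(2πi))^{−3/2}` converges absolutely and
`G(z) = i G(1/z) + ((i−1)/(4π)) Σ_{n≥0} (n + Log z/(2πi))^{−3/2}`. -/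
theorem G_inversion (z : ℂ) (h1 : 1 ≤ ‖z‖) (h2 : 0 ≤ z.im)
    (h3 : z ∉ Complex.ofReal '' Set.Ici (1 : ℝ)) :
    Summable (fun n : ℕ =>
      ‖((n : ℂ) + Complex.log z / (2 * (Real.pi : ℂ) * Complex.I)) ^ (-(3 : ℂ) / 2)‖) ∧
    G z = Complex.I * G (1 / z) +
      ((Complex.I - 1) / (4 * (Real.pi : ℂ))) *
        ∑' n : ℕ, ((n : ℂ) + Complex.log z / (2 * (Real.pi : ℂ) * Complex.I)) ^ (-(3 : ℂ) / 2) :=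
  G_inversion_general z <| (arg_nonneg_iff.2 h2).lt_of_ne fun h ↦
    h3 ⟨‖z‖, h1, (eq_coe_norm_of_nonneg (arg_eq_zero_iff_zero_le.1 h.symm)).symm⟩
end

section
/- G(−1) = (1 − 2√2) · ζ(3/2) / (4π); equivalently, (√π/2) · Σ_{n∈ℤ} (2πin − iπ)^{−3/2} = (1 − 2√2) ζ(3/2)/(4π). -/
open scoped Real

theorem ofReal_mul_cpow {r : ℝ} (hr : 0 ≤ r) (x s : ℂ) :
    ((r : ℂ) * x) ^ s = (r : ℂ) ^ s * x ^ s := by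
  rcases eq_or_ne s 0 with rfl | hs
  · simp only [Complex.cpow_zero, mul_one]
  rcases hr.eq_or_lt with rfl | hr
  · simp only [Complex.ofReal_zero, zero_mul, Complex.zero_cpow hs]
  rcases eq_or_ne x 0 with rfl | hx
  · simp only [mul_zero, Complex.zero_cpow hs]
  have hr' : (r : ℂ) ≠ 0 := Complex.ofReal_ne_zero.mpr hr.ne'
  rw [Complex.cpow_def_of_ne_zero (mul_ne_zero hr' hx), Complex.cpow_def_of_ne_zero hr',
    Complex.cpow_def_of_ne_zero hx, Complex.log_ofReal_mul hr hx, ← Complex.exp_add,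
    Complex.ofReal_log hr.le, add_mul]

theorem I_cpow_add_neg_I_cpow (s : ℂ) :
    Complex.I ^ s + (-Complex.I) ^ s = 2 * Complex.cos (π * s / 2) := by
  rw [Complex.cpow_def_of_ne_zero Complex.I_ne_zero,
    Complex.cpow_def_of_ne_zero (neg_ne_zero.mpr Complex.I_ne_zero),
    Complex.log_I, Complex.log_neg_I, Complex.two_cos]
  ring_nf

theorem ofReal_cpow_neg_three_halves {a : ℝ} (ha : 0 < a) :
    (a : ℂ) ^ (-(3 / 2) : ℂ) = ((a * √a)⁻¹ : ℝ) := by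
  have hexponent : (-(3 / 2) : ℂ) = (-(1 + 1 / 2) : ℝ) := by push_cast; ring
  rw [hexponent, ← Complex.ofReal_cpow ha.le, Real.rpow_neg ha.le, Real.rpow_add ha,
    Real.rpow_one, ← Real.sqrt_eq_rpow]

section OddPart

variable {s : ℂ}

theorem hasSum_natCast_cpow_neg (hs : 1 < s.re) :
    HasSum (fun n : ℕ ↦ (n : ℂ) ^ (-s)) (riemannZeta s) := by
  simp only [Complex.cpow_neg, ← one_div, zeta_eq_tsum_one_div_nat_cpow hs]
  exact (Complex.summable_one_div_nat_cpow.mpr hs).hasSum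

theorem hasSum_two_mul_add_one_cpow_neg (hs : 1 < s.re) :
    HasSum (fun k : ℕ ↦ ((2 * k + 1 : ℕ) : ℂ) ^ (-s)) ((1 - 2 ^ (-s)) * riemannZeta s) := by
  have hzeta := hasSum_natCast_cpow_neg hs
  have heven : HasSum (fun k : ℕ ↦ ((2 * k : ℕ) : ℂ) ^ (-s)) (2 ^ (-s) * riemannZeta s) :=
    (hzeta.mul_left _).congr_fun fun k ↦ by
      simpa using Complex.natCast_mul_natCast_cpow 2 k (-s)
  have hodd : Summable fun k : ℕ ↦ ((2 * k + 1 : ℕ) : ℂ) ^ (-s) :=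
    hzeta.summable.comp_injective (i := fun k : ℕ ↦ 2 * k + 1) fun a b h ↦ by simpa using h
  have hsplit : 2 ^ (-s) * riemannZeta s + ∑' k : ℕ, ((2 * k + 1 : ℕ) : ℂ) ^ (-s)
      = riemannZeta s :=
    (HasSum.even_add_odd (f := fun n : ℕ ↦ (n : ℂ) ^ (-s)) heven hodd.hasSum).unique hzeta
  rw [sub_mul, one_mul]
  exact hodd.hasSum_iff.mpr (eq_sub_of_add_eq' hsplit)

theorem hasSum_int_two_mul_add_one_mul_cpow_neg (hs : 1 < s.re) (w : ℂ) :
    HasSum (fun n : ℤ ↦ ((2 * n + 1) * w) ^ (-s))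
      ((w ^ (-s) + (-w) ^ (-s)) * ((1 - 2 ^ (-s)) * riemannZeta s)) := by
  have hray (x : ℂ) : HasSum (fun k : ℕ ↦ ((2 * k + 1) * x) ^ (-s))
      (x ^ (-s) * ((1 - 2 ^ (-s)) * riemannZeta s)) := by
    refine ((hasSum_two_mul_add_one_cpow_neg hs).mul_left _).congr_fun fun k ↦ ?_
    simpa [mul_comm] using ofReal_mul_cpow (Nat.cast_nonneg (2 * k + 1)) x (-s)
  rw [add_mul]
  refine HasSum.of_nat_of_neg_add_one (hray w) ((hray (-w)).congr_fun fun k ↦ ?_)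
  congr 1
  push_cast
  ring

theorem hasSum_int_two_pi_I_mul_sub_log_neg_one_cpow_neg (hs : 1 < s.re) :
    HasSum (fun n : ℤ ↦ (2 * π * Complex.I * n - Complex.log (-1)) ^ (-s))
      (2 * Complex.cos (π * s / 2) * π ^ (-s) * ((1 - 2 ^ (-s)) * riemannZeta s)) := by
  have hphases : (π * Complex.I) ^ (-s) + (-(π * Complex.I)) ^ (-s)
      = 2 * Complex.cos (π * s / 2) * π ^ (-s) := by
    rw [← mul_neg, ofReal_mul_cpow Real.pi_pos.le, ofReal_mul_cpow Real.pi_pos.le, ← mul_add,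
      I_cpow_add_neg_I_cpow, mul_neg, neg_div, Complex.cos_neg, mul_comm]
  rw [← hphases]
  refine ((Equiv.subRight (1 : ℤ)).hasSum_iff.mpr
    (hasSum_int_two_mul_add_one_mul_cpow_neg hs (π * Complex.I))).congr_fun fun n ↦ ?_
  simp only [Function.comp_apply, Equiv.subRight_apply, Complex.log_neg_one]
  congr 1
  push_cast
  ring

end OddPart

theorem cos_three_pi_div_four : Real.cos (3 * π / 4) = -(√2 / 2) := by
  rw [show 3 * π / 4 = π - π / 4 by ring, Real.cos_pi_sub, Real.cos_pi_div_four]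

/-- `G(−1) = (1 − 2√2) ζ(3/2) / (4π)`. -/
theorem G_neg_one :
    G (-1) = ((1 - 2 * Real.sqrt 2 : ℝ) : ℂ) * riemannZeta (3 / 2) /
      (4 * (Real.pi : ℂ)) := by
  have hs : 1 < (3 / 2 : ℂ).re := by norm_num
  have hcos : Complex.cos (π * (3 / 2) / 2) = (-(√2 / 2) : ℝ) := by
    rw [← cos_three_pi_div_four, Complex.ofReal_cos]
    push_cast
    ring_nf
  have htwo : (2 : ℂ) ^ (-(3 / 2) : ℂ) = ((2 * √2)⁻¹ : ℝ) :=
    mod_cast ofReal_cpow_neg_three_halves two_pos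
  have hconst : √π / 2 * (2 * -(√2 / 2) * (π * √π)⁻¹) * (1 - (2 * √2)⁻¹)
      = (1 - 2 * √2) / (4 * π) := by
    field_simp
    ring
  rw [G, neg_div, (hasSum_int_two_pi_I_mul_sub_log_neg_one_cpow_neg hs).tsum_eq, hcos,
    ofReal_cpow_neg_three_halves Real.pi_pos, htwo, mul_div_right_comm, ← mul_assoc, ← mul_assoc]
  congr 1
  exact_mod_cast hconst
end

section
/- For every fixed real number x, the limit as u → +∞ (along the reals) of e^u · Γ(u − 2x + 1/2) · u^{2x − u} equals √(2π). -/
/-!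
Write `S s = (s - 1/2) log s - s`; Stirling's formula says `log Γ(s) - S s → log √(2π)`.
Convexity of `log Γ` on `[s, s + 1]` and on `[s + t, s + t + 1]` pins `log Γ(s + t)` to
`log Γ(s) + t log s` up to `O(1 / s)` when `0 ≤ t ≤ 1`, and `S (s + t)` obeys the same estimate by
elementary bounds on `log`. So `log Γ - S` varies by `O(1 / n)` on `[n, n + 1]`, and the limit
along the integers, which is Stirling's formula for factorials, is also the limit along the reals.
Finally `S (u + a) - S u - a log u → 0` for every fixed `a`; the theorem is the case
`a = 1/2 - 2x`, where `S u + a log u` is the logarithm of `e^(-u) u^(u - 2x)`.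
-/

open Filter

open Real Topology

/-- The logarithm of `s ^ (s - 1/2) * e ^ (-s)`, which is the leading term in Stirling's formula
for `Γ(s)`, `s > 0`, without its constant factor `√(2π)`. -/
noncomputable def logStirling (s : ℝ) : ℝ :=
  (s - 1 / 2) * log s - s

section Increments

variable {s t : ℝ}

lemma log_add_le (hs : 0 < s) (hst : 0 < s + t) : log (s + t) ≤ log s + t / s := by
  have h := log_le_sub_one_of_pos (div_pos hst hs)
  rw [log_div hst.ne' hs.ne', add_div, div_self hs.ne'] at h
  linarith

lemma log_Gamma_add_one (hs : 0 < s) : log (Gamma (s + 1)) = log (Gamma s) + log s := by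
  rw [Gamma_add_one hs.ne', log_mul hs.ne' (Gamma_pos_of_pos hs).ne', add_comm]

lemma log_Gamma_add_le (hs : 0 < s) (ht₀ : 0 ≤ t) (ht₁ : t ≤ 1) :
    log (Gamma (s + t)) ≤ log (Gamma s) + t * log s := by
  have hconv := convexOn_log_Gamma.2 (Set.mem_Ioi.2 hs) (Set.mem_Ioi.2 (add_pos hs one_pos))
    (sub_nonneg.2 ht₁) ht₀ (sub_add_cancel 1 t)
  simp only [Function.comp_apply, smul_eq_mul, log_Gamma_add_one hs] at hconv
  calc log (Gamma (s + t)) = log (Gamma ((1 - t) * s + t * (s + 1))) := by ring_nf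
    _ ≤ (1 - t) * log (Gamma s) + t * (log (Gamma s) + log s) := hconv
    _ = log (Gamma s) + t * log s := by ring

lemma le_log_Gamma_add (hs : 0 < s) (ht₀ : 0 ≤ t) (ht₁ : t ≤ 1) :
    log (Gamma s) + t * log s - (1 - t) * (t / s) ≤ log (Gamma (s + t)) := by
  have hst : 0 < s + t := by positivity
  have hup : log (Gamma s) + log s ≤ log (Gamma (s + t)) + (1 - t) * log (s + t) := by
    have h := log_Gamma_add_le hst (sub_nonneg.2 ht₁) (sub_le_self 1 ht₀)
    rwa [add_add_sub_cancel, log_Gamma_add_one hs] at h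
  have hlog : (1 - t) * log (s + t) ≤ (1 - t) * (log s + t / s) :=
    mul_le_mul_of_nonneg_left (log_add_le hs hst) (sub_nonneg.2 ht₁)
  linarith

lemma logStirling_add_le (hs : 0 < s) (hst : 1 / 2 ≤ s + t) :
    logStirling (s + t) ≤ logStirling s + t * log s + (t - 1 / 2) * (t / s) := by
  have hlog : (s + t - 1 / 2) * log (s + t) ≤ (s + t - 1 / 2) * (log s + t / s) :=
    mul_le_mul_of_nonneg_left (log_add_le hs (by linarith)) (by linarith)
  have hcancel : s * (t / s) = t := mul_div_cancel₀ t hs.ne'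
  unfold logStirling
  linarith

lemma le_logStirling_add (hs : 0 < s) (hst : 1 / 2 ≤ s + t) :
    logStirling s + t * log s - t / (2 * (s + t)) ≤ logStirling (s + t) := by
  have hst₀ : 0 < s + t := by linarith
  have hlog : log s ≤ log (s + t) - t / (s + t) := by
    have h := log_add_le (t := -t) hst₀ (by linarith)
    rwa [add_neg_cancel_right, neg_div, ← sub_eq_add_neg] at h
  have hmul : (s + t - 1 / 2) * log s ≤ (s + t - 1 / 2) * (log (s + t) - t / (s + t)) :=
    mul_le_mul_of_nonneg_left hlog (by linarith)
  have hcancel : (s + t - 1 / 2) * (t / (s + t)) = t - t / (2 * (s + t)) := by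
    field_simp
  unfold logStirling
  linarith

lemma abs_log_Gamma_sub_logStirling_add_sub_le (hs : 1 / 2 ≤ s) (ht₀ : 0 ≤ t) (ht₁ : t ≤ 1) :
    |(log (Gamma (s + t)) - logStirling (s + t)) - (log (Gamma s) - logStirling s)| ≤
      t / (2 * s) := by
  have hs₀ : 0 < s := by linarith
  have hst : 1 / 2 ≤ s + t := by linarith
  have hquot : t / (2 * (s + t)) ≤ t / (2 * s) := by gcongr; linarith
  have hsum : (1 - t) * (t / s) + (t - 1 / 2) * (t / s) = t / (2 * s) := by field_simp; ring
  rw [abs_le]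
  constructor
  · linarith [le_log_Gamma_add hs₀ ht₀ ht₁, logStirling_add_le hs₀ hst]
  · linarith [log_Gamma_add_le hs₀ ht₀ ht₁, le_logStirling_add hs₀ hst]

end Increments

lemma log_Gamma_sub_logStirling_natCast {n : ℕ} (hn : n ≠ 0) :
    log (Gamma n) - logStirling n = log (Stirling.stirlingSeq n) + log 2 / 2 := by
  have hn₀ : (0 : ℝ) < n := by positivity
  have hfact := log_Gamma_add_one hn₀
  rw [Gamma_nat_eq_factorial] at hfact
  rw [Stirling.log_stirlingSeq_formula, hfact, log_mul two_ne_zero hn₀.ne',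
    log_div hn₀.ne' (exp_ne_zero 1), log_exp, logStirling]
  ring

lemma tendsto_log_Gamma_sub_logStirling_natCast :
    Tendsto (fun n : ℕ ↦ log (Gamma n) - logStirling n) atTop (𝓝 (log √(2 * π))) := by
  have hconst : log √(2 * π) = log √π + log 2 / 2 := by
    rw [log_sqrt (by positivity), log_sqrt pi_pos.le, log_mul two_ne_zero pi_ne_zero]
    ring
  rw [hconst]
  refine ((Stirling.tendsto_stirlingSeq_sqrt_pi.log (by positivity)).add_const _).congr' ?_
  filter_upwards [eventually_ne_atTop 0] with n hn
  exact (log_Gamma_sub_logStirling_natCast hn).symm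

lemma tendsto_log_Gamma_sub_logStirling :
    Tendsto (fun s ↦ log (Gamma s) - logStirling s) atTop (𝓝 (log √(2 * π))) := by
  have hfloor : Tendsto (fun s : ℝ ↦ ⌊s⌋₊) atTop atTop := tendsto_nat_floor_atTop
  have hbound : Tendsto (fun s : ℝ ↦ 1 / (2 * (⌊s⌋₊ : ℝ))) atTop (𝓝 0) :=
    ((tendsto_natCast_atTop_atTop.comp hfloor).const_mul_atTop two_pos).const_div_atTop 1
  refine (tendsto_log_Gamma_sub_logStirling_natCast.comp hfloor).congr_dist
    (squeeze_zero' (.of_forall fun _ ↦ dist_nonneg) ?_ hbound)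
  filter_upwards [eventually_ge_atTop 1] with s hs
  have hn : (1 : ℝ) ≤ ⌊s⌋₊ := by exact_mod_cast Nat.le_floor (by simpa using hs)
  have hfract : s - ⌊s⌋₊ ≤ 1 := by linarith [Nat.lt_floor_add_one s]
  have h := abs_log_Gamma_sub_logStirling_add_sub_le (s := ⌊s⌋₊) (by linarith)
    (sub_nonneg.2 (Nat.floor_le (zero_le_one.trans hs))) hfract
  rw [add_sub_cancel] at h
  rw [dist_comm, dist_eq]
  exact h.trans (by gcongr)

lemma tendsto_logStirling_add_sub (a : ℝ) :
    Tendsto (fun u ↦ logStirling (u + a) - logStirling u - a * log u) atTop (𝓝 0) := by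
  have hlog : Tendsto (fun u : ℝ ↦ log (1 + a / u)) atTop (𝓝 0) := by
    simpa using ((tendsto_id.const_div_atTop a).const_add 1).log (by norm_num)
  have hlim : Tendsto (fun u ↦ u * log (1 + a / u) + (a - 1 / 2) * log (1 + a / u) - a) atTop
      (𝓝 0) := by
    simpa using ((tendsto_mul_log_one_add_div_atTop a).add (hlog.const_mul (a - 1 / 2))).sub_const a
  refine hlim.congr' ?_
  filter_upwards [eventually_gt_atTop 0, eventually_gt_atTop (-a)] with u hu hua
  have hua₀ : u + a ≠ 0 := by linarith
  have hsplit : log (1 + a / u) = log (u + a) - log u := by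
    rw [← log_div hua₀ hu.ne', add_div, div_self hu.ne']
  rw [hsplit, logStirling, logStirling]
  ring

lemma tendsto_log_Gamma_add_sub_logStirling (a : ℝ) :
    Tendsto (fun u ↦ log (Gamma (u + a)) - (logStirling u + a * log u)) atTop
      (𝓝 (log √(2 * π))) := by
  have h := (tendsto_log_Gamma_sub_logStirling.comp
    (tendsto_atTop_add_const_right atTop a tendsto_id)).add (tendsto_logStirling_add_sub a)
  rw [add_zero] at h
  refine h.congr fun u ↦ ?_
  simp only [Function.comp_apply, id_eq]
  ring

/-- For every fixed real `x`, `e^u Γ(u − 2x + 1/2) u^{2x−u} → √(2π)` as `u → +∞`. -/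
theorem stirling_limit (x : ℝ) :
    Tendsto (fun u : ℝ =>
        Real.exp u * Real.Gamma (u - 2 * x + 1 / 2) * u ^ (2 * x - u))
      atTop (nhds (Real.sqrt (2 * Real.pi))) := by
  have hlim := (tendsto_log_Gamma_add_sub_logStirling (1 / 2 - 2 * x)).rexp
  rw [exp_log (by positivity)] at hlim
  refine hlim.congr' ?_
  filter_upwards [eventually_gt_atTop 0, eventually_gt_atTop (2 * x - 1 / 2)] with u hu hux
  have hshift : u - 2 * x + 1 / 2 = u + (1 / 2 - 2 * x) := by ring
  have hΓ : 0 < Gamma (u + (1 / 2 - 2 * x)) := Gamma_pos_of_pos (by linarith)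
  have hlog : log (Gamma (u + (1 / 2 - 2 * x))) - (logStirling u + (1 / 2 - 2 * x) * log u) =
      u + log (Gamma (u + (1 / 2 - 2 * x))) + log u * (2 * x - u) := by
    rw [logStirling]
    ring
  rw [hlog, exp_add, exp_add, exp_log hΓ, ← rpow_def_of_pos hu, hshift]
end

section
/- For every fixed real number x, the limit as u → +∞ (along the reals) of u · ((e^u/√(2π)) · Γ(u − 2x + 1/2) · u^{2x − u} − 1) equals 2x² − 1/24; that is, the second coefficient in the asymptotic expansion of (e^u/√(2π)) Γ(u − 2x + 1/2) u^{2x−u} is Δ_1(x) = 2x² − 1/24. -/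
/-!
Write `Γ(u + a) = √(2π) u ^ (u + a - 1/2) e ^ (-u) e ^ R(u)` with `a = 1/2 - 2x`. By the functional
equation of `Γ`, the forward difference `R(u + 1) - R(u)` involves only logarithms, whose Taylor
expansions show that it is `-c/u² + o(1/u²)` with `c = B₂(a)/2 = 2x² - 1/24`, `B₂` being the second
Bernoulli polynomial; the forward difference of `c/u` has the same form. Euler's limit formula for
`Γ` and Stirling's formula for `n!` give `R(u + n) → 0`, so the Stolz–Cesàro theorem in its `0/0`
form yields `u R(u) → c`, and exponentiating does not change the first-order coefficient.
-/

open Filter Topology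
open scoped fwdDiff

section StolzCesaro

lemma norm_le_of_norm_fwdDiff_le {E : Type*} [SeminormedAddCommGroup E] {f : ℕ → E} {g : ℕ → ℝ}
    (hf : Tendsto f atTop (𝓝 0)) (hg : Tendsto g atTop (𝓝 0))
    (h : ∀ n, ‖Δ_[1] f n‖ ≤ -Δ_[1] g n) : ‖f 0‖ ≤ g 0 := by
  have hanti : Antitone fun n ↦ g n - ‖f n‖ := antitone_nat_of_succ_le fun n ↦ by
    have hstep : ‖f (n + 1) - f n‖ ≤ -(g (n + 1) - g n) := h n
    linarith [norm_sub_norm_le (f n) (f (n + 1)), norm_sub_rev (f n) (f (n + 1))]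
  have hlim : Tendsto (fun n ↦ g n - ‖f n‖) atTop (𝓝 0) := by simpa using hg.sub hf.norm
  exact sub_nonneg.1 (hanti.le_of_tendsto hlim 0)

lemma dist_div_le_of_dist_fwdDiff_div_le {f g : ℕ → ℝ} {c ε : ℝ}
    (hf : Tendsto f atTop (𝓝 0)) (hg : Tendsto g atTop (𝓝 0)) (hg_anti : ∀ n, Δ_[1] g n < 0)
    (h : ∀ n, dist (Δ_[1] f n / Δ_[1] g n) c ≤ ε) : dist (f 0 / g 0) c ≤ ε := by
  have hstrict : StrictAnti g := strictAnti_nat_of_succ_lt fun n ↦ sub_neg.1 (hg_anti n)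
  have hpos : 0 < g 0 := (hstrict.antitone.le_of_tendsto hg 1).trans_lt (hstrict Nat.zero_lt_one)
  have hdiff (n : ℕ) : ‖Δ_[1] (fun m ↦ f m - c * g m) n‖ ≤ -Δ_[1] (fun m ↦ ε * g m) n :=
    calc ‖Δ_[1] (fun m ↦ f m - c * g m) n‖
        = ‖(Δ_[1] f n / Δ_[1] g n - c) * Δ_[1] g n‖ := by
          rw [sub_mul, div_mul_cancel₀ _ (hg_anti n).ne]
          simp only [fwdDiff]
          ring_nf
      _ ≤ ε * -Δ_[1] g n := by
          rw [norm_mul, Real.norm_of_nonpos (hg_anti n).le]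
          exact mul_le_mul_of_nonneg_right (h n) (neg_nonneg.2 (hg_anti n).le)
      _ = -Δ_[1] (fun m ↦ ε * g m) n := by
          simp only [fwdDiff]
          ring
  have hbound : ‖f 0 - c * g 0‖ ≤ ε * g 0 :=
    norm_le_of_norm_fwdDiff_le (by simpa using hf.sub (hg.const_mul c))
      (by simpa using hg.const_mul ε) hdiff
  rwa [Real.dist_eq, div_sub' hpos.ne', abs_div, abs_of_pos hpos, div_le_iff₀ hpos,
    mul_comm (g 0)]

theorem tendsto_div_of_tendsto_fwdDiff_div {M : Type*} [AddCommMonoidWithOne M] [PartialOrder M]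
    [AddLeftMono M] [ZeroLEOneClass M] {f g : M → ℝ} {c : ℝ}
    (hf : ∀ᶠ u in atTop, Tendsto (fun n : ℕ ↦ f (u + n)) atTop (𝓝 0))
    (hg : ∀ᶠ u in atTop, Tendsto (fun n : ℕ ↦ g (u + n)) atTop (𝓝 0))
    (hg_anti : ∀ᶠ u in atTop, Δ_[1] g u < 0)
    (h : Tendsto (fun u ↦ Δ_[1] f u / Δ_[1] g u) atTop (𝓝 c)) :
    Tendsto (fun u ↦ f u / g u) atTop (𝓝 c) := by
  rw [Metric.nhds_basis_closedBall.tendsto_right_iff] at h ⊢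
  intro ε hε
  filter_upwards [hf, hg, eventually_forall_ge_atTop.2 hg_anti,
    eventually_forall_ge_atTop.2 (h ε hε)] with u hfu hgu hanti hratio
  have hle (n : ℕ) : u ≤ u + n := le_add_of_nonneg_right n.cast_nonneg'
  have hshift (k : M → ℝ) (n : ℕ) : Δ_[1] (fun m : ℕ ↦ k (u + m)) n = Δ_[1] k (u + n) := by
    simp only [fwdDiff, Nat.cast_add, Nat.cast_one, add_assoc]
  have hdist := dist_div_le_of_dist_fwdDiff_div_le hfu hgu
    (fun n ↦ by simpa only [hshift g] using hanti _ (hle n))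
    (fun n ↦ by simpa only [hshift, Metric.mem_closedBall] using hratio _ (hle n))
  simpa only [Nat.cast_zero, add_zero, Metric.mem_closedBall] using hdist

end StolzCesaro

section Elementary

lemma tendsto_pow_mul_log_one_add_div_add_sum (s : ℝ) (n : ℕ) :
    Tendsto (fun u : ℝ ↦ u ^ n *
      (∑ i ∈ Finset.range n, (-(s / u)) ^ (i + 1) / (i + 1) + Real.log (1 + s / u)))
      atTop (𝓝 0) := by
  have hsmall : Tendsto (fun u : ℝ ↦ |s| / u) atTop (𝓝 0) :=
    tendsto_const_nhds.div_atTop tendsto_id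
  have hbound : Tendsto (fun u : ℝ ↦ |s| ^ n * (|s| / u) / (1 - |s| / u)) atTop (𝓝 0) := by
    simpa using! (hsmall.const_mul (|s| ^ n)).div (hsmall.const_sub 1) (by simp)
  refine squeeze_zero_norm' ?_ hbound
  filter_upwards [eventually_gt_atTop 0, hsmall.eventually_lt_const one_pos] with u hu hlt
  have habs : |-(s / u)| = |s| / u := by rw [abs_neg, abs_div, abs_of_pos hu]
  have htaylor := Real.abs_log_sub_add_sum_range_le (habs.trans_lt hlt) n
  rw [habs, sub_neg_eq_add] at htaylor
  rw [norm_mul, Real.norm_of_nonneg (by positivity)]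
  calc u ^ n * ‖_‖ ≤ u ^ n * ((|s| / u) ^ (n + 1) / (1 - |s| / u)) := by gcongr; exact htaylor
    _ = |s| ^ n * (|s| / u) / (1 - |s| / u) := by
      rw [pow_succ, div_pow]
      field_simp

lemma tendsto_mul_exp_sub_one {α : Type*} {l : Filter α} {r R : α → ℝ} {c : ℝ}
    (hr : Tendsto r l atTop) (h : Tendsto (fun t ↦ r t * R t) l (𝓝 c)) :
    Tendsto (fun t ↦ r t * (Real.exp (R t) - 1)) l (𝓝 c) := by
  have hR : Tendsto R l (𝓝 0) := (h.div_atTop hr).congr' <| by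
    filter_upwards [hr.eventually_ne_atTop 0] with t ht using mul_div_cancel_left₀ _ ht
  simpa using (Real.hasDerivAt_exp 0).hasFDerivAt.hasFDerivWithinAt.lim hR
    (Eventually.of_forall fun _ ↦ Set.mem_univ _) h

lemma log_one_add_div {b u : ℝ} (hu : 0 < u) (hub : 0 < u + b) :
    Real.log (1 + b / u) = Real.log (u + b) - Real.log u := by
  rw [← Real.log_div hub.ne' hu.ne', add_div, div_self hu.ne']

end Elementary

section Gamma

lemma log_Gamma_add_one_s13 {y : ℝ} (hy : 0 < y) :
    Real.log (Real.Gamma (y + 1)) = Real.log (Real.Gamma y) + Real.log y := by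
  rw [Real.Gamma_add_one hy.ne', Real.log_mul hy.ne' (Real.Gamma_pos_of_pos hy).ne', add_comm]

lemma tendsto_log_Gamma_add_nat_sub {y : ℝ} (hy : 0 < y) :
    Tendsto (fun n : ℕ ↦ Real.log (Real.Gamma (y + n)) -
      ((y - 1) * Real.log n + Real.log n.factorial)) atTop (𝓝 0) := by
  have hEuler := (Real.BohrMollerup.tendsto_log_gamma hy).const_sub (Real.log (Real.Gamma y))
  have hlog := (Real.tendsto_log_comp_add_sub_log y).comp tendsto_natCast_atTop_atTop
  have hlim := hEuler.sub hlog
  rw [sub_self, sub_zero] at hlim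
  refine hlim.congr fun n ↦ ?_
  have hprod : Real.log (Real.Gamma (y + n)) =
      Real.log (Real.Gamma y) + ∑ m ∈ Finset.range n, Real.log (y + m) :=
    Real.BohrMollerup.f_add_nat_eq (f := Real.log ∘ Real.Gamma) log_Gamma_add_one_s13 hy n
  rw [hprod, Real.BohrMollerup.logGammaSeq, Finset.sum_range_succ, Function.comp_apply,
    add_comm (n : ℝ) y]
  ring

lemma tendsto_log_factorial_sub_stirling :
    Tendsto (fun n : ℕ ↦ Real.log n.factorial -
      ((n + 1 / 2) * Real.log n - n + Real.log (2 * Real.pi) / 2)) atTop (𝓝 0) := by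
  have hlim := (Stirling.tendsto_stirlingSeq_sqrt_pi.log (by positivity)).sub_const
    (Real.log √Real.pi)
  rw [sub_self] at hlim
  refine hlim.congr' ?_
  filter_upwards [eventually_ne_atTop 0] with n hn
  have hn' : (n : ℝ) ≠ 0 := Nat.cast_ne_zero.2 hn
  rw [Stirling.log_stirlingSeq_formula, Real.log_sqrt Real.pi_pos.le,
    Real.log_mul two_ne_zero hn', Real.log_mul two_ne_zero Real.pi_ne_zero,
    Real.log_div hn' (Real.exp_ne_zero 1), Real.log_exp]
  ring

end Gamma

/-- The error `R(u)` of the leading Stirling approximation to `log Γ(u + a)`. The approximation is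
written in powers of `u`, not of `u + a`, and is meaningful for `0 < u` and `0 < u + a`. -/
noncomputable def logStirlingError (a u : ℝ) : ℝ :=
  Real.log (Real.Gamma (u + a)) -
    ((u + a - 1 / 2) * Real.log u - u + Real.log (2 * Real.pi) / 2)

namespace logStirlingError

lemma exp_eq {a u : ℝ} (hu : 0 < u) (hua : 0 < u + a) :
    Real.exp (logStirlingError a u) =
      Real.exp u / √(2 * Real.pi) * Real.Gamma (u + a) * u ^ (1 / 2 - a - u) := by
  have hpi : 0 < 2 * Real.pi := by positivity
  have hsum : logStirlingError a u = u - Real.log √(2 * Real.pi) +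
      Real.log (Real.Gamma (u + a)) + Real.log u * (1 / 2 - a - u) := by
    rw [logStirlingError, Real.log_sqrt hpi.le]
    ring
  rw [hsum, Real.exp_add, Real.exp_add, Real.exp_sub, Real.exp_log (Real.sqrt_pos.2 hpi),
    Real.exp_log (Real.Gamma_pos_of_pos hua), Real.rpow_def_of_pos hu]

lemma fwdDiff_eq {a u : ℝ} (hu : 0 < u) (hua : 0 < u + a) :
    Δ_[1] (logStirlingError a) u =
      1 + Real.log (1 + a / u) - (u + a + 1 / 2) * Real.log (1 + 1 / u) := by
  rw [fwdDiff, logStirlingError, logStirlingError, add_right_comm u 1 a, log_Gamma_add_one_s13 hua,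
    log_one_add_div hu hua, log_one_add_div hu (by positivity)]
  ring

lemma tendsto_sq_mul_fwdDiff (a : ℝ) :
    Tendsto (fun u ↦ u ^ 2 * Δ_[1] (logStirlingError a) u) atTop
      (𝓝 (-(a ^ 2 / 2 - a / 2 + 1 / 12))) := by
  have hinv : Tendsto (fun u : ℝ ↦ u⁻¹) atTop (𝓝 0) := tendsto_inv_atTop_zero
  -- The remainder of `log (1 + 1 / u)` is needed to third order as its coefficient grows like `u`.
  have hlim := (((tendsto_pow_mul_log_one_add_div_add_sum a 2).sub
    (((hinv.const_mul (a + 1 / 2)).const_add 1).mul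
      (tendsto_pow_mul_log_one_add_div_add_sum 1 3))).sub
    (hinv.const_mul ((a + 1 / 2) / 3))).sub_const (a ^ 2 / 2 - a / 2 + 1 / 12)
  simp only [mul_zero, sub_zero, zero_sub] at hlim
  refine hlim.congr' ?_
  filter_upwards [eventually_gt_atTop 0, eventually_gt_atTop (-a)] with u hu hua
  rw [fwdDiff_eq hu (by linarith)]
  simp only [Finset.sum_range_succ, Finset.sum_range_zero]
  push_cast
  field_simp
  ring

lemma tendsto_add_nat {a u : ℝ} (hua : 0 < u + a) :
    Tendsto (fun n : ℕ ↦ logStirlingError a (u + n)) atTop (𝓝 0) := by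
  have hcast : Tendsto ((↑) : ℕ → ℝ) atTop atTop := tendsto_natCast_atTop_atTop
  have hmul := (Real.tendsto_mul_log_one_add_div_atTop u).comp hcast
  have hlog := (Real.tendsto_log_comp_add_sub_log u).comp hcast
  have hlim := ((tendsto_log_Gamma_add_nat_sub hua).add tendsto_log_factorial_sub_stirling).sub
    ((hmul.sub_const u).add (hlog.const_mul (u + a - 1 / 2)))
  simp only [mul_zero, add_zero, sub_self] at hlim
  refine hlim.congr' ?_
  filter_upwards [hcast.eventually_gt_atTop 0, hcast.eventually_gt_atTop (-u)] with n hn hnu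
  simp only [Function.comp_apply]
  rw [log_one_add_div hn (by linarith), logStirlingError, add_right_comm u n a, add_comm u n]
  ring

theorem tendsto_mul_self (a : ℝ) :
    Tendsto (fun u ↦ u * logStirlingError a u) atTop (𝓝 (a ^ 2 / 2 - a / 2 + 1 / 12)) := by
  have hinv : Tendsto (fun u : ℝ ↦ u⁻¹) atTop (𝓝 0) := tendsto_inv_atTop_zero
  have hΔinv {u : ℝ} (hu : 0 < u) : Δ_[1] (fun v : ℝ ↦ v⁻¹) u = -(u * (u + 1))⁻¹ := by
    rw [fwdDiff]
    field_simp
    ring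
  have hquot : Tendsto (fun u ↦ Δ_[1] (logStirlingError a) u / Δ_[1] (fun v : ℝ ↦ v⁻¹) u) atTop
      (𝓝 (a ^ 2 / 2 - a / 2 + 1 / 12)) := by
    have hlim := (hinv.const_add 1).mul (tendsto_sq_mul_fwdDiff a).neg
    rw [add_zero, one_mul, neg_neg] at hlim
    refine hlim.congr' ?_
    filter_upwards [eventually_gt_atTop 0] with u hu
    rw [hΔinv hu]
    field_simp
  have hdiv := tendsto_div_of_tendsto_fwdDiff_div
    ((eventually_gt_atTop (-a)).mono fun u hu ↦ tendsto_add_nat (by linarith))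
    (Eventually.of_forall fun u ↦
      hinv.comp (tendsto_atTop_add_const_left _ u tendsto_natCast_atTop_atTop))
    ((eventually_gt_atTop 0).mono fun u hu ↦ by rw [hΔinv hu, neg_lt_zero]; positivity)
    hquot
  simpa only [div_inv_eq_mul, mul_comm] using hdiv

end logStirlingError

/-- For every fixed real `x`,
`u ((e^u/√(2π)) Γ(u − 2x + 1/2) u^{2x−u} − 1) → 2x² − 1/24` as `u → +∞`;
i.e. the second coefficient of the asymptotic expansion is `Δ_1(x) = 2x² − 1/24`. -/
theorem stirling_second_coefficient (x : ℝ) :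
    Tendsto (fun u : ℝ =>
        u * (Real.exp u / Real.sqrt (2 * Real.pi) *
          Real.Gamma (u - 2 * x + 1 / 2) * u ^ (2 * x - u) - 1))
      atTop (nhds (2 * x ^ 2 - 1 / 24)) := by
  have hlim := tendsto_mul_exp_sub_one tendsto_id
    (logStirlingError.tendsto_mul_self (1 / 2 - 2 * x))
  have hcoeff : (1 / 2 - 2 * x) ^ 2 / 2 - (1 / 2 - 2 * x) / 2 + 1 / 12 = 2 * x ^ 2 - 1 / 24 := by
    ring
  rw [hcoeff] at hlim
  refine hlim.congr' ?_
  filter_upwards [eventually_gt_atTop 0, eventually_gt_atTop (2 * x)] with u hu hux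
  have hshift : u + (1 / 2 - 2 * x) = u - 2 * x + 1 / 2 := by ring
  rw [logStirlingError.exp_eq hu (by linarith), hshift, sub_sub_cancel, id]
end
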